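/- Let S be a positive signature, 𝕂 a field of characteristic zero, and f', f'' reduced S-forests. Then in the algebra N(S) one has F_{f'} · F_{f''} = Σ_f F_f, where the sum ranges over all reduced S-forests f with f' ▽ f'' ≼ f ≼ f' △ f''. -/

import Mathlib

open scoped BigOperators

/-- An `S`-term over a signature given by a type `S` of generators with arity map `ar`. -/
inductive STerm (S : Type) (ar : S → ℕ) : Type
  | leaf : STerm S ar
  | node (g : S) (c : Fin (ar g) → STerm S ar) : STerm S ar

namespace STerm

variable {S : Type} {ar : S → ℕ}

/-- The arity of a term: its number of leaves. -/
def arity : STerm S ar → ℕ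
  | leaf => 1
  | node _ c => ∑ i, (c i).arity

/-- The degree of a term: its number of internal nodes. -/
def degree : STerm S ar → ℕ
  | leaf => 0
  | node _ c => 1 + ∑ i, (c i).degree

/-- The word of decorations of internal nodes along left-to-right preorder traversal. -/
def decs : STerm S ar → List S
  | leaf => []
  | node g c => g :: (List.ofFn fun i => (c i).decs).flatten

/-- Grafting `t⟨l⟩`: the `i`-th leaf (left-to-right) is replaced by the `i`-th entry of `l`. -/
def graftList : STerm S ar → List (STerm S ar) → STerm S ar
  | leaf, l => l.headD leaf
  | node g c, l =>
      node g fun i =>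
        (c i).graftList
          ((l.drop (∑ j : Fin (ar g), if (j : ℕ) < (i : ℕ) then (c j).arity else 0)).take
            (c i).arity)

/-- Grafting a term at the rightmost leaf. -/
def graftRight : STerm S ar → STerm S ar → STerm S ar
  | leaf, s => s
  | node g c, s => node g fun i => if (i : ℕ) = ar g - 1 then (c i).graftRight s else c i

/-- Grafting a term at the leftmost (first) leaf, i.e. `∘₁`. -/
def graftFirst : STerm S ar → STerm S ar → STerm S ar
  | leaf, s => s
  | node g c, s => node g fun i => if (i : ℕ) = 0 then (c i).graftFirst s else c i

/-- Preorder traversal word: `none` for leaves, `some g` for an internal node decorated by `g`. -/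
def preo : STerm S ar → List (Option S)
  | leaf => [none]
  | node g c => some g :: (List.ofFn fun i => (c i).preo).flatten

/-- The number of extremal leaves of a term: leaves which come after every internal
node in the preorder traversal. -/
def extremalCount (t : STerm S ar) : ℕ :=
  (t.preo.reverse.takeWhile fun o => o.isNone).length

/-- The list of edges `(i, j, i')` (`i'` is the `j`-th child of `i`, `j` being 1-based) between
internal nodes, internal nodes being numbered from `0` in preorder. -/
def edges : STerm S ar → List (ℕ × ℕ × ℕ)
  | leaf => []
  | node g c =>
      (List.ofFn fun i : Fin (ar g) =>
        (match c i with
          | leaf => ([] : List (ℕ × ℕ × ℕ))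
          | node _ _ =>
            [(0, (i : ℕ) + 1,
               1 + ∑ j : Fin (ar g), if (j : ℕ) < (i : ℕ) then (c j).degree else 0)]) ++
          (c i).edges.map fun e =>
            (e.1 + (1 + ∑ j : Fin (ar g), if (j : ℕ) < (i : ℕ) then (c j).degree else 0), e.2.1,
              e.2.2 + (1 + ∑ j : Fin (ar g), if (j : ℕ) < (i : ℕ) then (c j).degree else 0))).flatten

/-- The easterly wind move inside a term: a subterm rooted at an internal node which has an
immediate left sibling is detached (replaced by a leaf) and grafted onto the rightmost leaf of
the subtree rooted at this left sibling. -/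
inductive TermMove : STerm S ar → STerm S ar → Prop
  | here (g : S) (c : Fin (ar g) → STerm S ar) (j j' : Fin (ar g))
      (hj : (j' : ℕ) = (j : ℕ) + 1) (hne : c j' ≠ leaf) :
      TermMove (node g c)
        (node g (Function.update (Function.update c j ((c j).graftRight (c j'))) j' leaf))
  | child (g : S) (c : Fin (ar g) → STerm S ar) (i : Fin (ar g)) (t' : STerm S ar) :
      TermMove (c i) t' → TermMove (node g c) (node g (Function.update c i t'))

end STerm
section Forest

variable {S : Type} {ar : S → ℕ}

/-- A forest is reduced when none of its trees is a leaf. -/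
def IsReducedF (f : List (STerm S ar)) : Prop := ∀ t ∈ f, t ≠ STerm.leaf

/-- The easterly wind move on forests: either the root of a tree having an immediate left
sibling tree is detached and grafted onto the rightmost leaf of this left sibling, or a move
happens inside one of the trees. -/
inductive ForestMove : List (STerm S ar) → List (STerm S ar) → Prop
  | root (pre : List (STerm S ar)) (t t' : STerm S ar) (post : List (STerm S ar)) :
      t' ≠ STerm.leaf → ForestMove (pre ++ t :: t' :: post) (pre ++ t.graftRight t' :: post)
  | tree (pre : List (STerm S ar)) (t t' : STerm S ar) (post : List (STerm S ar)) :
      STerm.TermMove t t' → ForestMove (pre ++ t :: post) (pre ++ t' :: post)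

/-- The relation `≼`: reflexive and transitive closure of the easterly wind move. -/
def EWLe (f f' : List (STerm S ar)) : Prop := Relation.ReflTransGen ForestMove f f'

/-- Decoration word of a forest. -/
def forestDecs (f : List (STerm S ar)) : List S := (f.map STerm.decs).flatten

/-- Degree (number of internal nodes) of a forest. -/
def forestDeg (f : List (STerm S ar)) : ℕ := (f.map STerm.degree).sum

/-- Preorder indices (from 0) of the roots of the trees of a forest. -/
def rootIdxs : List (STerm S ar) → List ℕ
  | [] => []
  | t :: r => 0 :: (rootIdxs r).map (· + t.degree)

/-- Edges between internal nodes of a forest, numbered in preorder from 0. -/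
def forestEdges : List (STerm S ar) → List (ℕ × ℕ × ℕ)
  | [] => []
  | t :: r => t.edges ++ (forestEdges r).map fun e => (e.1 + t.degree, e.2.1, e.2.2 + t.degree)

/-- Grafting the terms of `l` onto the successive extremal leaves of `t`. -/
def underSub (t : STerm S ar) (l : List (STerm S ar)) : STerm S ar :=
  t.graftList (List.ofFn (n := t.arity) fun p =>
    if (p : ℕ) < t.arity - t.extremalCount then STerm.leaf
    else l.getD ((p : ℕ) - (t.arity - t.extremalCount)) STerm.leaf)

/-- The under product `f' △ f''` of two forests. -/
def underP (f' f'' : List (STerm S ar)) : List (STerm S ar) :=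
  match f'.getLast? with
  | none => f''
  | some t => f'.dropLast ++ underSub t (f''.take t.extremalCount) :: f''.drop t.extremalCount

/-- The term `ι g` of degree 1 whose root is decorated by `g`. -/
def iotaT (g : S) : STerm S ar := STerm.node g fun _ => STerm.leaf

/-- The minimal forest of the interval `W(w)`. -/
def fmin (w : List S) : List (STerm S ar) := w.map iotaT

/-- The maximal forest of the interval `W(w)`: `ι g₁ ∘₁ ι g₂ ∘₁ ⋯ ∘₁ ι g_ℓ`. -/
def fmax : List S → List (STerm S ar)
  | [] => []
  | g :: gs => [(gs.map iotaT).foldl STerm.graftFirst (iotaT g)]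

end Forest
section Alphabet

variable {S : Type} {ar : S → ℕ}

/-- An `S`-forest-like alphabet: a type endowed with a root relation, decoration relations,
and edge relations. -/
structure ForestAlphabet (S : Type) (A : Type) where
  Root : A → Prop
  Dec : S → A → Prop
  Edge : ℕ → A → A → Prop

/-- `f`-compatibility `w ⊩^A f` of a word `w` over a forest-like alphabet. -/
def ForestAlphabet.Compat {A : Type} (Al : ForestAlphabet S A) (w : List A)
    (f : List (STerm S ar)) : Prop :=
  w.length = forestDeg f ∧
  (∀ (i : ℕ) (hi : i < w.length), i ∈ rootIdxs f → Al.Root (w.get ⟨i, hi⟩)) ∧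
  (∀ (i : ℕ) (hi : i < w.length) (hd : i < (forestDecs f).length),
      Al.Dec ((forestDecs f).get ⟨i, hd⟩) (w.get ⟨i, hi⟩)) ∧
  (∀ p j q, (p, j, q) ∈ forestEdges f → ∀ (hp : p < w.length) (hq : q < w.length),
      Al.Edge j (w.get ⟨p, hp⟩) (w.get ⟨q, hq⟩))

/-- The disjoint sum of two forest-like alphabets. -/
def ForestAlphabet.dsum {A B : Type} (Al : ForestAlphabet S A) (Bl : ForestAlphabet S B) :
    ForestAlphabet S (A ⊕ B) where
  Root := Sum.elim Al.Root Bl.Root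
  Dec g := Sum.elim (Al.Dec g) (Bl.Dec g)
  Edge j x y :=
    match x, y with
    | Sum.inl a, Sum.inl a' => Al.Edge j a a'
    | Sum.inr b, Sum.inr b' => Bl.Edge j b b'
    | Sum.inl _, Sum.inr b => Bl.Root b
    | Sum.inr _, Sum.inl _ => False

/-- The alphabet `𝔸_S` with letters `a_{g,u}`, `g ∈ S`, `u ∈ ℕ*`. -/
def ASAlphabet (S : Type) : ForestAlphabet S (S × List ℕ) where
  Root a := ∃ ℓ, a.2 = List.replicate ℓ 0
  Dec g a := a.1 = g
  Edge j a a' := ∃ ℓ, a'.2 = a.2 ++ j :: List.replicate ℓ 0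

/-- The alphabet `A_ℕ` with letters `a_i`, `i ∈ ℕ`, where every letter is a root, every letter
has every decoration, and `a_i →_j a_{i'}` iff `i < i'`. -/
def ANAlphabet (S : Type) : ForestAlphabet S ℕ where
  Root _ := True
  Dec _ _ := True
  Edge _ i i' := i < i'

/-- The packing of a word of natural numbers. -/
def pck (w : List ℕ) : List ℕ :=
  w.map fun m => ((w.filter (· ≤ m)).dedup).length

end Alphabet
section Algebra

open scoped TensorProduct

variable {S : Type} {ar : S → ℕ}

/-- Reduced `S`-terms. -/
abbrev RTerm (S : Type) (ar : S → ℕ) := {t : STerm S ar // t ≠ STerm.leaf}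

/-- The map `rd` keeping the non-leaf entries of a sequence of terms. -/
def rdF : List (STerm S ar) → List (RTerm S ar)
  | [] => []
  | STerm.leaf :: r => rdF r
  | STerm.node g c :: r => ⟨STerm.node g c, fun h => nomatch h⟩ :: rdF r

/-- The natural Hopf algebra `N(S)` as a module: the monoid algebra of the free monoid on the
set of reduced `S`-terms. -/
abbrev NAlg (𝕂 : Type) [CommSemiring 𝕂] (S : Type) (ar : S → ℕ) :=
  MonoidAlgebra 𝕂 (FreeMonoid (RTerm S ar))

/-- The basis element `E_f` of `N(S)` indexed by a reduced forest `f`. -/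
noncomputable def EBasis (𝕂 : Type) [CommSemiring 𝕂] {S : Type} {ar : S → ℕ}
    (f : List (RTerm S ar)) : NAlg 𝕂 S ar :=
  MonoidAlgebra.of 𝕂 (FreeMonoid (RTerm S ar)) (FreeMonoid.ofList f)

/-- The coproduct `Δ` of `N(S)`, defined linearly on the basis by
`Δ E_f = Σ E_{rd(s₁…s_k)} ⊗ E_{rd(u₁…u_k)}`, the sum ranging over all factorizations
`t_m = s_m⟨ū_m⟩` of the entries of `f`. -/
noncomputable def DeltaN (𝕂 : Type) [CommSemiring 𝕂] (S : Type) (ar : S → ℕ) :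
    NAlg 𝕂 S ar →ₗ[𝕂] (NAlg 𝕂 S ar) ⊗[𝕂] (NAlg 𝕂 S ar) :=
  (Finsupp.lift ((NAlg 𝕂 S ar) ⊗[𝕂] (NAlg 𝕂 S ar)) 𝕂 (FreeMonoid (RTerm S ar)) fun m =>
    ∑ᶠ c ∈ {c : List (STerm S ar × List (STerm S ar)) |
        List.Forall₂ (fun p t => p.2.length = p.1.arity ∧ p.1.graftList p.2 = t.val) c
          (FreeMonoid.toList m)},
      (EBasis 𝕂 (rdF (c.map Prod.fst))) ⊗ₜ[𝕂] (EBasis 𝕂 (rdF (c.flatMap Prod.snd)))) ∘ₗ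
    (MonoidAlgebra.coeffLinearEquiv 𝕂).toLinearMap

end Algebra

namespace EW

open STerm

variable {S : Type} {ar : S → ℕ}

/-- Build a node labelled `g` from the first `ar g` entries of the list. -/
def act (g : S) (Q : List (STerm S ar)) : List (STerm S ar) :=
  node g (fun i => Q.getD i leaf) :: Q.drop (ar g)

theorem act_append (g : S) (c : Fin (ar g) → STerm S ar) (L : List (STerm S ar)) :
    act g (List.ofFn c ++ L) = node g c :: L := by
  unfold act
  congr 1
  · congr 1
    funext i
    simp [List.getElem?_append_left]
  · simp

theorem exists_ofFn {n : ℕ} {α : Type} (Q : List α) (h : n ≤ Q.length) :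
    ∃ (c : Fin n → α) (L : List α), Q = List.ofFn c ++ L := by
  refine ⟨fun i => Q[i.1]'(lt_of_lt_of_le i.2 h), Q.drop n, ?_⟩
  have : List.ofFn (fun i : Fin n => Q[i.1]'(lt_of_lt_of_le i.2 h)) = Q.take n := by
    apply List.ext_getElem
    · simp [h]
    · intro i h1 h2
      simp
  rw [this, List.take_append_drop]

theorem set_ofFn {n : ℕ} {α : Type} (c : Fin n → α) (i : Fin n) (t : α) :
    (List.ofFn c).set i t = List.ofFn (Function.update c i t) := by
  apply List.ext_getElem
  · simp
  · intro j h1 h2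
    simp only [List.getElem_set, List.getElem_ofFn, Function.update_apply]
    by_cases h : (i : ℕ) = j
    · have : (⟨j, by simpa using h2⟩ : Fin n) = i := Fin.ext h.symm
      simp [h, this]
    · have : (⟨j, by simpa using h2⟩ : Fin n) ≠ i := fun e => h (by simp [← e])
      simp [h, this]

/-- Preorder word of a list of terms. -/
def preoL (L : List (STerm S ar)) : List (Option S) := (L.map STerm.preo).flatten

@[simp] theorem preoL_nil : preoL ([] : List (STerm S ar)) = [] := rfl

theorem preoL_cons (t : STerm S ar) (L : List (STerm S ar)) : preoL (t :: L) = t.preo ++ preoL L := by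
  simp [preoL]

@[simp] theorem preoL_leaf (L : List (STerm S ar)) : preoL (leaf :: L) = none :: preoL L := by
  simp [preoL, STerm.preo]

@[simp] theorem preoL_append (L M : List (STerm S ar)) : preoL (L ++ M) = preoL L ++ preoL M := by
  simp [preoL]

theorem preoL_ofFn {n : ℕ} (c : Fin n → STerm S ar) :
    preoL (List.ofFn c) = (List.ofFn fun i => (c i).preo).flatten := by
  simp [preoL, List.map_ofFn, Function.comp_def]

theorem preoL_node (g : S) (c : Fin (ar g) → STerm S ar) (L : List (STerm S ar)) :
    preoL (node g c :: L) = some g :: preoL (List.ofFn c ++ L) := by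
  rw [preoL_append, preoL_ofFn, preoL_cons, STerm.preo]; simp

theorem peel_ind {P : List (STerm S ar) → Prop} (nil : P [])
    (hl : ∀ M, P M → P (leaf :: M))
    (hn : ∀ (g : S) (c : Fin (ar g) → STerm S ar) M, P (List.ofFn c ++ M) → P (node g c :: M)) :
    ∀ M, P M := by
  have key : ∀ n, ∀ M : List (STerm S ar), (preoL M).length = n → P M := by
    intro n
    induction n using Nat.strong_induction_on with
    | _ n ih =>
      intro M hM
      match M with
      | [] => exact nil
      | leaf :: M => exact hl M (ih _ (by rw [← hM]; simp) M rfl)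
      | node g c :: M => exact hn g c M (ih _ (by rw [← hM, preoL_node]; simp) _ rfl)
  exact fun M => key _ M rfl

/-- number of nodes -/
def degL (L : List (STerm S ar)) : ℕ := (preoL L).countP (fun o => o.isSome)

/-- number of leaves -/
def arL (L : List (STerm S ar)) : ℕ := (preoL L).countP (fun o => o.isNone)

@[simp] theorem degL_nil : degL ([] : List (STerm S ar)) = 0 := rfl
@[simp] theorem degL_leaf (L : List (STerm S ar)) : degL (leaf :: L) = degL L := by simp [degL]
theorem degL_node (g : S) (c : Fin (ar g) → STerm S ar) (L : List (STerm S ar)) :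
    degL (node g c :: L) = degL (List.ofFn c ++ L) + 1 := by simp [degL, preoL_node]
@[simp] theorem degL_append (L M : List (STerm S ar)) : degL (L ++ M) = degL L + degL M := by
  simp [degL]
@[simp] theorem arL_nil : arL ([] : List (STerm S ar)) = 0 := rfl
@[simp] theorem arL_leaf (L : List (STerm S ar)) : arL (leaf :: L) = arL L + 1 := by simp [arL]
theorem arL_node (g : S) (c : Fin (ar g) → STerm S ar) (L : List (STerm S ar)) :
    arL (node g c :: L) = arL (List.ofFn c ++ L) := by simp [arL, preoL_node]
@[simp] theorem arL_append (L M : List (STerm S ar)) : arL (L ++ M) = arL L + arL M := by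
  simp [arL]
theorem degL_cons (t : STerm S ar) (L : List (STerm S ar)) : degL (t :: L) = degL [t] + degL L := by
  rw [← List.singleton_append, degL_append]
theorem arL_cons (t : STerm S ar) (L : List (STerm S ar)) : arL (t :: L) = arL [t] + arL L := by
  rw [← List.singleton_append, arL_append]
@[simp] theorem degL_replicate (n : ℕ) : degL (List.replicate n (leaf : STerm S ar)) = 0 := by
  induction n <;> simp_all [List.replicate_succ]
@[simp] theorem arL_replicate (n : ℕ) : arL (List.replicate n (leaf : STerm S ar)) = n := by
  induction n <;> simp_all [List.replicate_succ]

theorem degL_eq_zero {L : List (STerm S ar)} (h : degL L = 0) :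
    L = List.replicate L.length leaf := by
  induction L with
  | nil => rfl
  | cons t L ih =>
    cases t with
    | leaf => simp at h; simp [List.replicate_succ, ← ih h]
    | node g c => rw [degL_node] at h; omega

/-- Keep the nonleaf terms. -/
def rd : List (STerm S ar) → List (STerm S ar)
  | [] => []
  | leaf :: r => rd r
  | node g c :: r => node g c :: rd r

@[simp] theorem rd_nil : rd ([] : List (STerm S ar)) = [] := rfl
@[simp] theorem rd_leaf (L : List (STerm S ar)) : rd (leaf :: L) = rd L := rfl
@[simp] theorem rd_node (g : S) (c : Fin (ar g) → STerm S ar) (L : List (STerm S ar)) :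
    rd (node g c :: L) = node g c :: rd L := rfl
theorem rd_cons_ne {t : STerm S ar} (h : t ≠ leaf) (L : List (STerm S ar)) :
    rd (t :: L) = t :: rd L := by
  cases t
  · exact absurd rfl h
  · rfl
@[simp] theorem rd_append (L M : List (STerm S ar)) : rd (L ++ M) = rd L ++ rd M := by
  induction L with
  | nil => rfl
  | cons t L ih => cases t <;> simp [ih]
@[simp] theorem rd_replicate (n : ℕ) : rd (List.replicate n (leaf : STerm S ar)) = [] := by
  induction n <;> simp_all [List.replicate_succ]
theorem rd_reduced (L : List (STerm S ar)) : IsReducedF (rd L) := by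
  induction L with
  | nil => simp [IsReducedF]
  | cons t L ih =>
    cases t with
    | leaf => exact ih
    | node g c => simpa [IsReducedF] using ih
theorem rd_of_reduced {L : List (STerm S ar)} (h : IsReducedF L) : rd L = L := by
  induction L with
  | nil => rfl
  | cons t L ih =>
    have h2 : IsReducedF L := fun s hs => h s (by simp [hs])
    rw [rd_cons_ne (h t (by simp)), ih h2]
@[simp] theorem rd_rd (L : List (STerm S ar)) : rd (rd L) = rd L := rd_of_reduced (rd_reduced L)
theorem rd_length_le (L : List (STerm S ar)) : (rd L).length ≤ L.length := by
  induction L with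
  | nil => simp
  | cons t L ih => cases t <;> simp <;> omega

/-- sibling moves on lists of terms, keeping leaves -/
inductive SM : List (STerm S ar) → List (STerm S ar) → Prop
  | m1 (L : List (STerm S ar)) (i : ℕ) (t t' : STerm S ar) (h : L[i]? = some t)
      (hm : TermMove t t') : SM L (L.set i t')
  | m3 (L : List (STerm S ar)) (i : ℕ) (y x : STerm S ar) (hy : L[i]? = some y)
      (hx : L[i+1]? = some x) (hne : x ≠ leaf) :
      SM L ((L.set i (y.graftRight x)).set (i+1) leaf)

theorem SM.cons {L L' : List (STerm S ar)} (t : STerm S ar) (h : SM L L') : SM (t :: L) (t :: L') := by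
  cases h with
  | m1 i u u' h hm => exact SM.m1 (t :: L) (i+1) u u' (by simpa using h) hm
  | m3 i y x hy hx hne =>
    exact SM.m3 (t :: L) (i+1) y x (by simpa using hy) (by simpa using hx) hne

theorem SM.length {L L' : List (STerm S ar)} (h : SM L L') : L'.length = L.length := by
  cases h <;> simp

theorem SM.bubble (x : STerm S ar) (hx : x ≠ leaf) (L : List (STerm S ar)) :
    SM (leaf :: x :: L) (x :: leaf :: L) :=
  SM.m3 (leaf :: x :: L) 0 leaf x rfl rfl hx

theorem graftRight_node (hpos : ∀ g : S, 0 < ar g) (g : S) (c : Fin (ar g) → STerm S ar)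
    (x : STerm S ar) :
    (node g c).graftRight x = node g (Function.update c ⟨ar g - 1, by have := hpos g; omega⟩
      ((c ⟨ar g - 1, by have := hpos g; omega⟩).graftRight x)) := by
  rw [STerm.graftRight]
  congr 1
  funext i
  rw [Function.update_apply]
  by_cases h : (i : ℕ) = ar g - 1
  · have : i = ⟨ar g - 1, by have := hpos g; omega⟩ := Fin.ext h
    rw [if_pos h, if_pos this]
    exact congrArg (fun j => (c j).graftRight x) this
  · have : i ≠ ⟨ar g - 1, by have := hpos g; omega⟩ := fun e => h (by simp [e])
    simp [h, this]

theorem SM.act (hpos : ∀ g : S, 0 < ar g) (g : S) {Q Q' : List (STerm S ar)}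
    (hl : ar g ≤ Q.length) (h : SM Q Q') : SM (act g Q) (act g Q') := by
  obtain ⟨c, L, rfl⟩ := exists_ofFn Q hl
  have hp := hpos g
  cases h with
  | m1 i t t' h hm =>
    by_cases hi : i < ar g
    · rw [List.set_append_left _ _ (by simpa using hi)]
      have e := set_ofFn c ⟨i, hi⟩ t'
      simp only at e
      rw [e, act_append, act_append]
      rw [List.getElem?_append_left (by simpa using hi)] at h
      simp [hi] at h
      exact SM.m1 (node g c :: L) 0 _ _ rfl (TermMove.child g c ⟨i, hi⟩ t' (by rw [h]; exact hm))
    · rw [List.set_append_right _ _ (by simpa using hi), act_append, act_append]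
      rw [List.getElem?_append_right (by simpa using hi)] at h
      simp at h
      simpa using (SM.m1 L _ _ _ h hm).cons (node g c)
  | m3 i y x hy hx hne =>
    by_cases hi : i + 1 < ar g
    · have hi' : i < ar g := by omega
      rw [List.set_append_left _ _ (by simpa using hi'), List.set_append_left _ _ (by simpa using hi)]
      have e := set_ofFn c ⟨i, hi'⟩ (y.graftRight x)
      simp only at e
      rw [e]
      have e := set_ofFn (Function.update c ⟨i, hi'⟩ (y.graftRight x)) ⟨i+1, hi⟩ leaf
      simp only at e
      rw [e, act_append, act_append]
      rw [List.getElem?_append_left (by simpa using hi')] at hy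
      rw [List.getElem?_append_left (by simpa using hi)] at hx
      simp [hi, hi'] at hx hy
      subst hx hy
      exact SM.m1 (node g c :: L) 0 _ _ rfl (TermMove.here g c ⟨i, hi'⟩ ⟨i+1, hi⟩ rfl hne)
    · by_cases hi' : i < ar g
      · have hie : i = ar g - 1 := by omega
        subst hie
        rw [List.set_append_left _ _ (by simpa using hi'), List.set_append_right _ _ (by simp; omega)]
        have e := set_ofFn c ⟨_, hi'⟩ (y.graftRight x)
        simp only at e
        rw [e, act_append, act_append]
        rw [List.getElem?_append_left (by simpa using hi')] at hy
        rw [List.getElem?_append_right (by simp; omega)] at hx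
        simp [hp] at hy
        have h0 : ar g - 1 + 1 - ar g = 0 := by omega
        simp [h0] at hx
        obtain ⟨post, rfl⟩ : ∃ post, L = x :: post := by
          cases L with
          | nil => simp at hx
          | cons a L => simp at hx; exact ⟨L, by rw [hx]⟩
        subst hy
        have := SM.m3 (node g c :: x :: post) 0 _ _ rfl rfl hne
        rw [graftRight_node hpos] at this
        simpa [h0] using this
      · rw [List.set_append_right _ _ (by simp; omega), List.set_append_right _ _ (by simp; omega),
          act_append, act_append]
        rw [List.getElem?_append_right (by simp; omega)] at hx hy
        simp only [List.length_ofFn] at hx hy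
        rw [show i + 1 - ar g = i - ar g + 1 by omega] at hx
        have := (SM.m3 L _ _ _ hy hx hne).cons (node g c)
        simpa [show i + 1 - ar g = i - ar g + 1 by omega] using this

theorem SM.inv_leaf {L Q : List (STerm S ar)} (h : SM (leaf :: L) Q) :
    (∃ L', Q = leaf :: L' ∧ SM L L') ∨
      (∃ x post, L = x :: post ∧ x ≠ leaf ∧ Q = x :: leaf :: post) := by
  cases h with
  | m1 i t t' h hm =>
    cases i with
    | zero => simp at h; subst h; cases hm
    | succ i => exact Or.inl ⟨_, rfl, SM.m1 L i t t' (by simpa using h) hm⟩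
  | m3 i y x hy hx hne =>
    cases i with
    | zero =>
      right
      cases L with
      | nil => simp at hx
      | cons a L =>
        simp at hx hy
        subst hx hy
        exact ⟨a, L, rfl, hne, rfl⟩
    | succ i => exact Or.inl ⟨_, rfl, SM.m3 L i y x (by simpa using hy) (by simpa using hx) hne⟩

theorem SM.inv_node (hpos : ∀ g : S, 0 < ar g) {g : S} {c : Fin (ar g) → STerm S ar}
    {L Q : List (STerm S ar)} (h : SM (node g c :: L) Q) :
    ∃ c' L', Q = node g c' :: L' ∧ SM (List.ofFn c ++ L) (List.ofFn c' ++ L') := by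
  have hp := hpos g
  cases h with
  | m1 i t t' h hm =>
    cases i with
    | zero =>
      simp at h; subst h
      cases hm with
      | here _ _ j j' hj hne =>
        refine ⟨_, _, rfl, ?_⟩
        have := SM.m3 (List.ofFn c ++ L) j (c j) (c j')
          (by rw [List.getElem?_append_left (by simp)]; simp)
          (by rw [← hj, List.getElem?_append_left (by simp)]; simp) hne
        rw [← hj, List.set_append_left _ _ (by simp), List.set_append_left _ _ (by simp),
          set_ofFn, set_ofFn] at this
        exact this
      | child _ _ i t' hm =>
        refine ⟨_, _, rfl, ?_⟩
        have := SM.m1 (List.ofFn c ++ L) i (c i) t'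
          (by rw [List.getElem?_append_left (by simp)]; simp) hm
        rw [List.set_append_left _ _ (by simp), set_ofFn] at this
        exact this
    | succ i =>
      refine ⟨c, _, rfl, ?_⟩
      have := SM.m1 (List.ofFn c ++ L) (ar g + i) t t'
          (by rw [List.getElem?_append_right (by simp)]; simpa using h) hm
      rw [List.set_append_right _ _ (by simp)] at this
      simpa using this
  | m3 i y x hy hx hne =>
    cases i with
    | zero =>
      cases L with
      | nil => simp at hx
      | cons a L =>
        simp at hx hy
        subst hx hy
        rw [graftRight_node hpos]
        refine ⟨_, _, rfl, ?_⟩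
        have := SM.m3 (List.ofFn c ++ a :: L) (ar g - 1) (c ⟨ar g - 1, by omega⟩) a
          (by rw [List.getElem?_append_left (by simp; omega)]; simp [hp])
          (by rw [List.getElem?_append_right (by simp; omega)]
              simp [show ar g - 1 + 1 - ar g = 0 by omega]) hne
        rw [List.set_append_left _ _ (by simp; omega), List.set_append_right _ _ (by simp; omega)] at this
        have e := set_ofFn c ⟨ar g - 1, by omega⟩ ((c ⟨ar g - 1, by omega⟩).graftRight a)
        simp only at e
        rw [e] at this
        simpa [show ar g - 1 + 1 - ar g = 0 by omega] using this
    | succ i =>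
      refine ⟨c, _, rfl, ?_⟩
      have := SM.m3 (List.ofFn c ++ L) (ar g + i) y x
          (by rw [List.getElem?_append_right (by simp)]; simpa using hy)
          (by rw [List.getElem?_append_right (by simp; omega)]
              simpa [show ar g + i + 1 - ar g = i + 1 by omega] using hx) hne
      rw [List.set_append_right _ _ (by simp), List.set_append_right _ _ (by simp; omega)] at this
      simpa [show ar g + i + 1 - ar g = i + 1 by omega] using this

end EW
namespace EW

open STerm

variable {S : Type} {ar : S → ℕ}

/-- The reflexive transitive closure of sibling moves. -/
def SMs (L L' : List (STerm S ar)) : Prop := Relation.ReflTransGen SM L L'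

theorem split_of_getElem? {α : Type} {L : List α} {i : ℕ} {t : α} (h : L[i]? = some t) :
    ∃ pre post, L = pre ++ t :: post ∧ pre.length = i := by
  obtain ⟨hi, rfl⟩ := List.getElem?_eq_some_iff.mp h
  exact ⟨L.take i, L.drop (i+1), by simp, by simp; omega⟩

theorem TermMove.ne_leaf {t t' : STerm S ar} (h : TermMove t t') : t ≠ leaf ∧ t' ≠ leaf := by
  cases h <;> simp

theorem graftRight_ne_leaf {y : STerm S ar} (x : STerm S ar) (h : y ≠ leaf) :
    y.graftRight x ≠ leaf := by
  cases y with
  | leaf => exact absurd rfl h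
  | node g c => rw [STerm.graftRight]; simp

theorem SM.rd_move {L L' : List (STerm S ar)} (h : SM L L') :
    rd L = rd L' ∨ ForestMove (rd L) (rd L') := by
  cases h with
  | m1 i t t' h hm =>
    obtain ⟨pre, post, rfl, rfl⟩ := split_of_getElem? h
    right
    obtain ⟨h1, h2⟩ := TermMove.ne_leaf hm
    simp only [rd_append, rd_cons_ne h1, List.set_append_right _ _ le_rfl, Nat.sub_self,
      List.set_cons_zero, rd_cons_ne h2]
    exact ForestMove.tree _ _ _ _ hm
  | m3 i y x hy hx hne =>
    obtain ⟨pre, post, rfl, rfl⟩ := split_of_getElem? hy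
    rw [List.getElem?_append_right (by omega)] at hx
    cases post with
    | nil => simp at hx
    | cons a post =>
      simp at hx
      subst hx
      simp only [rd_append, List.set_append_right _ _ le_rfl, Nat.sub_self, List.set_cons_zero]
      rw [List.set_append_right _ _ (by omega)]
      simp only [show pre.length + 1 - pre.length = 1 by omega, List.set_cons_succ,
        List.set_cons_zero, rd_append]
      cases y with
      | leaf => left; simp [STerm.graftRight, rd_cons_ne hne]
      | node g c =>
        right
        rw [rd_cons_ne (graftRight_ne_leaf a (by simp)), rd_cons_ne (by simp), rd_cons_ne hne, rd_leaf]
        exact ForestMove.root _ _ _ _ hne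

theorem SMs.rd_le {L L' : List (STerm S ar)} (h : SMs L L') : EWLe (rd L) (rd L') := by
  induction h with
  | refl => exact Relation.ReflTransGen.refl
  | tail _ h ih =>
    rcases h.rd_move with e | e
    · rwa [← e]
    · exact ih.tail e

theorem ForestMove.toSM {f f' : List (STerm S ar)} (h : ForestMove f f') :
    SM f f' ∨ ∃ a b, f' = a ++ b ∧ SM f (a ++ leaf :: b) := by
  cases h with
  | root pre t t' post hne =>
    right
    refine ⟨pre ++ [t.graftRight t'], post, by simp, ?_⟩
    have := SM.m3 (pre ++ t :: t' :: post) pre.length t t' (by simp)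
      (by rw [List.getElem?_append_right (by omega)]; simp) hne
    rw [List.set_append_right _ _ le_rfl, List.set_append_right _ _ (by omega)] at this
    simpa using this
  | tree pre t t' post hm =>
    left
    have := SM.m1 (pre ++ t :: post) pre.length t t' (by simp) hm
    simpa using this

/-- Truncation of a list of terms to its first `k` nodes. -/
def C : ℕ → List (STerm S ar) → List (STerm S ar)
  | 0, L => List.replicate L.length leaf
  | _+1, [] => []
  | k+1, leaf :: L => leaf :: C (k+1) L
  | k+1, node g c :: L => act g (C k (List.ofFn c ++ L))
termination_by k L => (k, L.length)

/-- The reduced forest remaining after dropping the first `k` nodes. -/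
def R : ℕ → List (STerm S ar) → List (STerm S ar)
  | 0, L => rd L
  | _+1, [] => []
  | k+1, leaf :: L => R (k+1) L
  | k+1, node g c :: L => R k (List.ofFn c ++ L)
termination_by k L => (k, L.length)

theorem C_zero (L : List (STerm S ar)) : C 0 L = List.replicate L.length leaf := by rw [C]
@[simp] theorem C_nil (k : ℕ) : C k ([] : List (STerm S ar)) = [] := by cases k <;> simp [C]
@[simp] theorem C_leaf (k : ℕ) (L : List (STerm S ar)) : C k (leaf :: L) = leaf :: C k L := by
  cases k with
  | zero => simp [C, List.replicate_succ]
  | succ k => rw [C]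
theorem C_node (k : ℕ) (g : S) (c : Fin (ar g) → STerm S ar) (L : List (STerm S ar)) :
    C (k+1) (node g c :: L) = act g (C k (List.ofFn c ++ L)) := by rw [C]
theorem R_zero (L : List (STerm S ar)) : R 0 L = rd L := by rw [R]
@[simp] theorem R_nil (k : ℕ) : R k ([] : List (STerm S ar)) = [] := by cases k <;> simp [R]
@[simp] theorem R_leaf (k : ℕ) (L : List (STerm S ar)) : R k (leaf :: L) = R k L := by
  cases k with
  | zero => simp [R]
  | succ k => rw [R]
theorem R_node (k : ℕ) (g : S) (c : Fin (ar g) → STerm S ar) (L : List (STerm S ar)) :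
    R (k+1) (node g c :: L) = R k (List.ofFn c ++ L) := by rw [R]

theorem act_length (g : S) (Q : List (STerm S ar)) : (act g Q).length = Q.length - ar g + 1 := by
  simp [act]

@[simp] theorem C_length (k : ℕ) (L : List (STerm S ar)) : (C k L).length = L.length := by
  induction L using peel_ind generalizing k with
  | nil => simp
  | hl M ih => simp [ih]
  | hn g c M ih =>
    cases k with
    | zero => simp [C_zero] <;> omega
    | succ k => rw [C_node, act_length, ih]; simp

theorem act_append_right (g : S) (Q N : List (STerm S ar)) (h : ar g ≤ Q.length) :
    act g (Q ++ N) = act g Q ++ N := by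
  obtain ⟨c, L, rfl⟩ := exists_ofFn Q h
  rw [List.append_assoc, act_append, act_append]; rfl

theorem C_append (k : ℕ) (A B : List (STerm S ar)) :
    C k (A ++ B) = C k A ++ C (k - degL A) B := by
  induction A using peel_ind generalizing k with
  | nil => simp
  | hl M ih => simp [ih]
  | hn g c M ih =>
    cases k with
    | zero => simp [C_zero] <;> omega
    | succ k =>
      rw [List.cons_append, C_node, C_node, ← List.append_assoc, ih, act_append_right _ _ _ (by simp),
        degL_node]
      congr 2; omega

theorem C_replicate (k n : ℕ) :
    C k (List.replicate n (leaf : STerm S ar)) = List.replicate n leaf := by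
  induction n <;> simp_all [List.replicate_succ]

theorem C_full (k : ℕ) (L : List (STerm S ar)) (h : degL L ≤ k) : C k L = L := by
  induction L using peel_ind generalizing k with
  | nil => simp
  | hl M ih => simp at h; simp [ih k h]
  | hn g c M ih =>
    rw [degL_node] at h
    cases k with
    | zero => omega
    | succ k => rw [C_node, ih k (by omega), act_append]

theorem R_append (k : ℕ) (A B : List (STerm S ar)) :
    R k (A ++ B) = R k A ++ R (k - degL A) B := by
  induction A using peel_ind generalizing k with
  | nil => simp
  | hl M ih => simp [ih]
  | hn g c M ih =>
    cases k with
    | zero => simp [R_zero]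
    | succ k =>
      rw [List.cons_append, R_node, R_node, ← List.append_assoc, ih,
        degL_node]
      congr 2; omega

theorem R_replicate (k n : ℕ) :
    R k (List.replicate n (leaf : STerm S ar)) = [] := by
  induction n <;> simp_all [List.replicate_succ]

theorem R_full (k : ℕ) (L : List (STerm S ar)) (h : degL L ≤ k) : R k L = [] := by
  induction L using peel_ind generalizing k with
  | nil => simp
  | hl M ih => simp at h; simp [ih k h]
  | hn g c M ih =>
    rw [degL_node] at h
    cases k with
    | zero => omega
    | succ k => rw [R_node, ih k (by omega)]

theorem degL_rd (L : List (STerm S ar)) : degL (rd L) = degL L := by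
  induction L with
  | nil => rfl
  | cons t L ih =>
    cases t with
    | leaf => simpa using ih
    | node g c => rw [rd_node, degL_cons, ih, ← degL_cons]

theorem C_cons_node (k : ℕ) (t : STerm S ar) (L : List (STerm S ar)) :
    C k (t :: L) = C k [t] ++ C (k - degL [t]) L := by
  rw [← List.singleton_append, C_append]

theorem rd_C_rd (k : ℕ) (L : List (STerm S ar)) : rd (C k (rd L)) = rd (C k L) := by
  induction L generalizing k with
  | nil => rfl
  | cons t L ih =>
    cases t with
    | leaf => simpa using ih k
    | node g c => rw [rd_node, C_cons_node, C_cons_node k _ L, rd_append, rd_append, ih]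

theorem R_rd (k : ℕ) (L : List (STerm S ar)) : R k (rd L) = R k L := by
  induction L generalizing k with
  | nil => rfl
  | cons t L ih =>
    cases t with
    | leaf => simpa using ih k
    | node g c =>
      rw [rd_node, ← List.singleton_append, R_append, ih, ← R_append, List.singleton_append]

theorem R_reduced (k : ℕ) (L : List (STerm S ar)) : IsReducedF (R k L) := by
  induction L using peel_ind generalizing k with
  | nil => simp [IsReducedF]
  | hl M ih => simpa using ih k
  | hn g c M ih =>
    cases k with
    | zero => rw [R_zero]; exact rd_reduced _
    | succ k => rw [R_node]; exact ih k

/-- `C` is monotone for sibling moves. -/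
theorem SM.C_mono (hpos : ∀ g : S, 0 < ar g) (k : ℕ) {L L' : List (STerm S ar)} (h : SM L L') :
    C k L = C k L' ∨ SM (C k L) (C k L') := by
  induction L using peel_ind generalizing k L' with
  | nil => cases h with
    | m1 i t t' h hm => simp at h
    | m3 i y x hy hx hne => simp at hx
  | hl M ih =>
    rcases h.inv_leaf with ⟨L', rfl, h'⟩ | ⟨x, post, rfl, hx, rfl⟩
    · rcases ih k h' with e | e
      · left; simp [e]
      · right; simpa using e.cons leaf
    · rw [C_leaf, C_cons_node, C_cons_node k x (leaf :: post), C_leaf]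
      have hl : (C k [x]).length = 1 := by simp
      obtain ⟨x', hx'⟩ := List.length_eq_one_iff.mp hl
      rw [hx']
      by_cases h0 : x' = leaf
      · left; subst h0; rfl
      · right; exact SM.bubble x' h0 _
  | hn g c M ih =>
    obtain ⟨c', L', rfl, h'⟩ := h.inv_node hpos
    cases k with
    | zero => left; rw [C_zero, C_zero, h.length]
    | succ k =>
      rw [C_node, C_node]
      rcases ih k h' with e | e
      · left; rw [e]
      · right; exact e.act hpos g (by simp)

theorem SM.R_mono (hpos : ∀ g : S, 0 < ar g) (k : ℕ) {L L' : List (STerm S ar)} (h : SM L L') :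
    R k L = R k L' ∨ ForestMove (R k L) (R k L') := by
  induction L using peel_ind generalizing k L' with
  | nil => cases h with
    | m1 i t t' h hm => simp at h
    | m3 i y x hy hx hne => simp at hx
  | hl M ih =>
    rcases h.inv_leaf with ⟨L', rfl, h'⟩ | ⟨x, post, rfl, hx, rfl⟩
    · simpa using ih k h'
    · left
      rw [R_leaf, ← List.singleton_append (l := post), R_append,
        ← List.singleton_append (l := leaf :: post), R_append k [x], R_leaf]
  | hn g c M ih =>
    obtain ⟨c', L', rfl, h'⟩ := h.inv_node hpos
    cases k with
    | zero => rw [R_zero, R_zero]; exact h.rd_move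
    | succ k =>
      rw [R_node, R_node]
      exact ih k h'

theorem ForestMove.toSM_rd {f f' : List (STerm S ar)} (h : ForestMove f f') :
    ∃ L, SM f L ∧ rd L = rd f' := by
  rcases ForestMove.toSM h with h | ⟨a, b, rfl, h'⟩
  · exact ⟨f', h, rfl⟩
  · exact ⟨_, h', by simp⟩

theorem C_mono (hpos : ∀ g : S, 0 < ar g) (k : ℕ) {f f' : List (STerm S ar)} (h : EWLe f f') :
    EWLe (rd (C k f)) (rd (C k f')) := by
  induction h with
  | refl => exact Relation.ReflTransGen.refl
  | @tail b c _ h ih =>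
    obtain ⟨L, hL, e⟩ := ForestMove.toSM_rd h
    rw [← rd_C_rd k c, ← e, rd_C_rd]
    rcases hL.C_mono hpos k with e | e
    · rwa [← e]
    · exact ih.trans (SMs.rd_le (Relation.ReflTransGen.single e))

theorem R_mono (hpos : ∀ g : S, 0 < ar g) (k : ℕ) {f f' : List (STerm S ar)} (h : EWLe f f') :
    EWLe (R k f) (R k f') := by
  induction h with
  | refl => exact Relation.ReflTransGen.refl
  | @tail b c _ h ih =>
    obtain ⟨L, hL, e⟩ := ForestMove.toSM_rd h
    rw [← R_rd k c, ← e, R_rd]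
    rcases hL.R_mono hpos k with e | e
    · rwa [← e]
    · exact ih.tail e

theorem SMs.cons {L L' : List (STerm S ar)} (t : STerm S ar) (h : SMs L L') :
    SMs (t :: L) (t :: L') := by
  induction h with
  | refl => exact Relation.ReflTransGen.refl
  | tail _ h ih => exact ih.tail (h.cons t)

theorem SMs.length {L L' : List (STerm S ar)} (h : SMs L L') : L'.length = L.length := by
  induction h with
  | refl => rfl
  | tail _ h ih => rw [h.length, ih]

theorem SMs.act (hpos : ∀ g : S, 0 < ar g) (g : S) {Q Q' : List (STerm S ar)}
    (hl : ar g ≤ Q.length) (h : SMs Q Q') : SMs (act g Q) (act g Q') := by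
  induction h with
  | refl => exact Relation.ReflTransGen.refl
  | tail h' h ih => exact ih.tail (h.act hpos g (by rw [SMs.length h']; exact hl))

/-- bubble a nonleaf term left over leaves -/
theorem bubble_many (x : STerm S ar) (hx : x ≠ leaf) (n : ℕ) (L : List (STerm S ar)) :
    SMs (List.replicate n leaf ++ x :: L) (x :: (List.replicate n leaf ++ L)) := by
  induction n with
  | zero => exact Relation.ReflTransGen.refl
  | succ n ih =>
    rw [List.replicate_succ, List.cons_append, List.cons_append]
    exact (ih.cons leaf).tail (SM.bubble x hx _)

theorem bubble_left (L : List (STerm S ar)) :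
    SMs L (rd L ++ List.replicate (L.length - (rd L).length) leaf) := by
  induction L with
  | nil => exact Relation.ReflTransGen.refl
  | cons t L ih =>
    have hl := rd_length_le L
    cases t with
    | leaf =>
      refine (ih.cons leaf).trans ?_
      rw [rd_leaf, List.length_cons, show L.length + 1 - (rd L).length =
        (L.length - (rd L).length) + 1 by omega]
      generalize L.length - (rd L).length = n
      have hr := rd_reduced L
      generalize rd L = N at hr
      induction N with
      | nil => exact Relation.ReflTransGen.refl
      | cons x N ih =>
        refine Relation.ReflTransGen.head (SM.bubble x (hr x (by simp)) _) ?_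
        exact SMs.cons x (ih (fun t ht => hr t (by simp [ht])))
    | node g c => simpa using ih.cons (node g c)

theorem bubble_right (L : List (STerm S ar)) :
    SMs (List.replicate L.length leaf ++ rd L) (L ++ List.replicate (rd L).length leaf) := by
  induction L with
  | nil => exact Relation.ReflTransGen.refl
  | cons t L ih =>
    cases t with
    | leaf => simpa [List.replicate_succ] using ih.cons leaf
    | node g c =>
      refine (bubble_many (node g c) (by simp) _ _).trans ?_
      rw [List.cons_append]
      apply SMs.cons
      rw [List.length_cons, List.replicate_succ, rd_node, List.length_cons]
      have := ih.cons leaf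
      refine this.trans ?_
      rw [List.replicate_succ]
      -- move a leaf from the head to after `L`
      clear this ih
      generalize (rd L).length = n
      induction L with
      | nil => exact Relation.ReflTransGen.refl
      | cons t L ih =>
        by_cases ht : t = leaf
        · subst ht; exact SMs.cons leaf ih
        · exact Relation.ReflTransGen.head (SM.bubble t ht _) (SMs.cons t ih)

theorem lower_SMs (hpos : ∀ g : S, 0 < ar g) (k : ℕ) (L : List (STerm S ar)) :
    SMs (C k L ++ R k L) (L ++ List.replicate (R k L).length leaf) := by
  induction L using peel_ind generalizing k with
  | nil => simp; exact Relation.ReflTransGen.refl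
  | hl M ih => simpa using (ih k).cons leaf
  | hn g c M ih =>
    cases k with
    | zero => rw [C_zero, R_zero]; exact bubble_right _
    | succ k =>
      have := (ih k).act hpos g (by simp; omega)
      rwa [act_append_right _ _ _ (by simp), act_append_right _ _ _ (by simp), act_append,
        ← C_node, ← R_node] at this

theorem lower_le (hpos : ∀ g : S, 0 < ar g) (k : ℕ) (f : List (STerm S ar)) (hf : IsReducedF f) :
    EWLe (rd (C k f) ++ R k f) f := by
  have := (lower_SMs hpos k f).rd_le
  rw [rd_append, rd_append, rd_replicate, rd_of_reduced hf, rd_of_reduced (R_reduced k f)] at this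
  simpa using this

end EW
namespace EW

open STerm

variable {S : Type} {ar : S → ℕ}

/-- Number of letters `none` having a letter `some` on their right. -/
def neW : List (Option S) → ℕ
  | [] => 0
  | none :: w => if w.countP (fun o => o.isSome) = 0 then 0 else neW w + 1
  | some _ :: w => neW w

theorem all_none {w : List (Option S)} (h : w.countP (fun o => o.isSome) = 0) :
    ∀ o ∈ w, o.isNone = true := by
  intro o ho
  have := (List.countP_eq_zero.mp h) o ho
  simpa using this

theorem neW_zero {w : List (Option S)} (h : w.countP (fun o => o.isSome) = 0) : neW w = 0 := by
  cases w with
  | nil => rfl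
  | cons o w =>
    cases o with
    | none => simp at h; simp [neW]; exact h
    | some g => simp at h

theorem neW_add (w : List (Option S)) :
    neW w + (w.reverse.takeWhile fun o => o.isNone).length = w.countP (fun o => o.isNone) := by
  induction w with
  | nil => rfl
  | cons o w ih =>
    have hlt : w.countP (fun o => o.isSome) ≠ 0 →
        (w.reverse.takeWhile fun o => o.isNone).length ≠ w.reverse.length := by
      intro h e
      apply h
      have e2 := (List.takeWhile_prefix (fun o : Option S => o.isNone) (l := w.reverse)).eq_of_length e
      rw [List.takeWhile_eq_self_iff] at e2
      rw [List.countP_eq_zero]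
      intro a ha
      have := e2 a (by simpa using ha)
      simpa using this
    rw [List.reverse_cons]
    by_cases h : w.countP (fun o => o.isSome) = 0
    · have hall := all_none h
      rw [List.takeWhile_append_of_pos (by simpa using hall)]
      have h1 : w.countP (fun o => o.isNone) = w.length := List.countP_eq_length.mpr hall
      cases o with
      | none => simp only [neW, h, if_true]; simp [h1]
      | some g =>
        simp only [neW, neW_zero h]; simp [h1]
    · rw [List.takeWhile_append, if_neg (hlt h)]
      cases o with
      | none => simp only [neW, h, if_false]; simp; omega
      | some g => simp only [neW]; simp; omega

/-- Number of non-extremal leaves. -/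
def neL (M : List (STerm S ar)) : ℕ := neW (preoL M)

theorem neL_zero {M : List (STerm S ar)} (h : degL M = 0) : neL M = 0 := neW_zero h
theorem neL_leaf {M : List (STerm S ar)} (h : degL M ≠ 0) : neL (leaf :: M) = neL M + 1 := by
  unfold neL
  rw [preoL_leaf, neW]; exact if_neg h
theorem neL_node (g : S) (c : Fin (ar g) → STerm S ar) (M : List (STerm S ar)) :
    neL (node g c :: M) = neL (List.ofFn c ++ M) := by
  unfold neL; rw [preoL_node, neW]
theorem neL_le (M : List (STerm S ar)) : neL M ≤ arL M := by
  have := neW_add (preoL M)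
  unfold neL arL; omega

theorem neL_append_zero (A B : List (STerm S ar)) (h : degL B = 0) : neL (A ++ B) = neL A := by
  induction A using peel_ind with
  | nil => exact neL_zero h
  | hl M ih =>
    by_cases h0 : degL M = 0
    · rw [neL_zero (by simp [h, h0]), neL_zero (by simp [h0])]
    · rw [List.cons_append, neL_leaf (by simp [h0]), neL_leaf h0, ih]
  | hn g c M ih => rw [List.cons_append, neL_node, neL_node, ← List.append_assoc, ih]

theorem neL_append (A B : List (STerm S ar)) (h : degL B ≠ 0) : neL (A ++ B) = arL A + neL B := by
  induction A using peel_ind with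
  | nil => simp
  | hl M ih =>
    rw [List.cons_append, neL_leaf (by simp [h]), ih, arL_leaf]; omega
  | hn g c M ih => rw [List.cons_append, neL_node, arL_node, ← List.append_assoc, ih]

/-- Grafting of a list of terms on the leaves of a list of terms. -/
def gra : List (STerm S ar) → List (STerm S ar) → List (STerm S ar)
  | [], _ => []
  | leaf :: M, l => l.headD leaf :: gra M l.tail
  | node g c :: M, l => act g (gra (List.ofFn c ++ M) l)
termination_by M => (preoL M).length
decreasing_by
  · simp
  · rw [preoL_node]; simp

@[simp] theorem gra_nil (l : List (STerm S ar)) : gra [] l = [] := by rw [gra]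
theorem gra_leaf (M l : List (STerm S ar)) : gra (leaf :: M) l = l.headD leaf :: gra M l.tail := by rw [gra]
theorem gra_node (g : S) (c : Fin (ar g) → STerm S ar) (M l : List (STerm S ar)) :
    gra (node g c :: M) l = act g (gra (List.ofFn c ++ M) l) := by rw [gra]

@[simp] theorem gra_length (M l : List (STerm S ar)) : (gra M l).length = M.length := by
  induction M using peel_ind generalizing l with
  | nil => simp
  | hl M ih => simp [gra_leaf, ih]
  | hn g c M ih => rw [gra_node, act_length, ih]; simp

theorem gra_append (A B l : List (STerm S ar)) : gra (A ++ B) l = gra A l ++ gra B (l.drop (arL A)) := by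
  induction A using peel_ind generalizing l with
  | nil => simp
  | hl M ih => rw [List.cons_append, gra_leaf, gra_leaf, ih]; simp
  | hn g c M ih =>
    rw [List.cons_append, gra_node, gra_node, ← List.append_assoc, ih,
      act_append_right _ _ _ (by simp), arL_node]

theorem gra_congr (M l l' : List (STerm S ar))
    (h : ∀ p < arL M, l.getD p leaf = l'.getD p leaf) : gra M l = gra M l' := by
  induction M using peel_ind generalizing l l' with
  | nil => simp
  | hl M ih =>
    rw [gra_leaf, gra_leaf, List.headD_eq_getD, List.headD_eq_getD, h 0 (by simp)]
    congr 1
    apply ih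
    intro p hp
    have := h (p+1) (by simpa using hp)
    simpa using this
  | hn g c M ih =>
    rw [gra_node, gra_node, ih l l' (by rwa [arL_node] at h)]

theorem arL_singleton (t : STerm S ar) : arL [t] = t.arity := by
  induction t with
  | leaf => simp [STerm.arity]
  | node g c ih =>
    rw [arL_node, List.append_nil, STerm.arity]
    simp only [← ih]
    generalize ar g = n at c
    clear ih
    induction n with
    | zero => simp
    | succ n ihn => rw [List.ofFn_succ, arL_cons, ihn, Fin.sum_univ_succ]

theorem gra_ofFn {n : ℕ} (c : Fin n → STerm S ar)
    (h : ∀ i l, gra [c i] l = [(c i).graftList l]) (l : List (STerm S ar)) :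
    gra (List.ofFn c) l = List.ofFn fun i =>
      (c i).graftList (l.drop (∑ j : Fin n, if (j : ℕ) < (i : ℕ) then (c j).arity else 0)) := by
  induction n generalizing l with
  | zero => simp
  | succ n ih =>
    rw [List.ofFn_succ, List.ofFn_succ, ← List.singleton_append, gra_append, h, ih _ (fun i => h i.succ)]
    simp [Fin.sum_univ_succ, arL_singleton]

theorem gra_singleton (t : STerm S ar) (l : List (STerm S ar)) : gra [t] l = [t.graftList l] := by
  induction t generalizing l with
  | leaf => rw [gra_leaf, STerm.graftList]; simp
  | node g c ih =>
    have : List.ofFn c ++ [] = List.ofFn c := by simp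
    rw [gra_node, this, gra_ofFn c ih, ← List.append_nil (List.ofFn _), act_append, STerm.graftList]
    congr 2
    funext i
    have := gra_congr [c i] (l.drop (∑ j : Fin (ar g), if (j : ℕ) < (i : ℕ) then (c j).arity else 0))
      ((l.drop (∑ j : Fin (ar g), if (j : ℕ) < (i : ℕ) then (c j).arity else 0)).take (c i).arity) (by
        intro p hp
        rw [arL_singleton] at hp
        simp [List.getElem?_take, hp])
    rw [ih, ih] at this
    simpa using this

theorem gra_leaves (n : ℕ) (l : List (STerm S ar)) :
    gra (List.replicate n leaf) l = l.take n ++ List.replicate (n - l.length) leaf := by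
  induction n generalizing l with
  | zero => simp
  | succ n ih =>
    rw [List.replicate_succ, gra_leaf, ih]
    cases l with
    | nil => simp [List.replicate_succ]
    | cons a l => simp

theorem gra_replicate (M : List (STerm S ar)) (n : ℕ) : gra M (List.replicate n leaf) = M := by
  induction M using peel_ind generalizing n with
  | nil => simp
  | hl M ih =>
    rw [gra_leaf]
    cases n with
    | zero => have := ih 0; simpa using this
    | succ n => simp [List.replicate_succ, ih]
  | hn g c M ih => rw [gra_node, ih, act_append]

theorem gra_take (M l r : List (STerm S ar)) (h : l.length = arL M) : gra M (l ++ r) = gra M l := by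
  apply gra_congr
  intro p hp
  simp [List.getElem?_append_left (h ▸ hp)]

/-- Filling the extremal leaves of `M` by `N`. -/
def fill (M N : List (STerm S ar)) : List (STerm S ar) :=
  gra M (List.replicate (neL M) leaf ++ N)

theorem fill_zero {M : List (STerm S ar)} (h : degL M = 0) (N : List (STerm S ar)) :
    fill M N = N.take M.length ++ List.replicate (M.length - N.length) leaf := by
  unfold fill
  rw [neL_zero h]
  have := gra_leaves M.length N
  rw [← degL_eq_zero h] at this
  simpa using this
theorem fill_leaf {M : List (STerm S ar)} (h : degL M ≠ 0) (N : List (STerm S ar)) :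
    fill (leaf :: M) N = leaf :: fill M N := by
  unfold fill
  rw [neL_leaf h, gra_leaf]; simp [List.replicate_succ]
theorem fill_node (g : S) (c : Fin (ar g) → STerm S ar) (M N : List (STerm S ar)) :
    fill (node g c :: M) N = act g (fill (List.ofFn c ++ M) N) := by
  unfold fill
  rw [neL_node, gra_node]
theorem fill_length (M N : List (STerm S ar)) : (fill M N).length = M.length := by simp [fill]

theorem underSub_eq (t : STerm S ar) (N : List (STerm S ar)) :
    [underSub t N] = fill [t] N := by
  unfold underSub fill
  have h := neW_add (preoL [t])
  have hp : preoL [t] = t.preo := by simp [preoL]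
  have ha : (preoL [t]).countP (fun o => o.isNone) = t.arity := arL_singleton t
  rw [hp] at h ha
  have he : t.arity - t.extremalCount = neL [t] := by
    unfold extremalCount neL; rw [hp]; omega
  rw [he, ← gra_singleton]
  apply gra_congr
  intro p hpp
  rw [arL_singleton] at hpp
  simp only [List.getD_eq_getElem?_getD]
  by_cases hlt : p < neL [t]
  · rw [List.getElem?_append_left (by simpa using hlt)]
    simp [hpp, hlt]
  · rw [List.getElem?_append_right (by simp; omega)]
    simp [hpp, hlt]

theorem extremalCount_eq (t : STerm S ar) : t.extremalCount + neL [t] = arL [t] := by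
  have h := neW_add (preoL [t])
  have hp : preoL [t] = t.preo := by simp [preoL]
  unfold extremalCount neL arL
  rw [hp] at h ⊢; omega

theorem split_last (M : List (STerm S ar)) (h : degL M ≠ 0) :
    ∃ A t a, M = A ++ t :: List.replicate a leaf ∧ t ≠ leaf := by
  induction M with
  | nil => simp at h
  | cons s M ih =>
    by_cases h0 : degL M = 0
    · refine ⟨[], s, M.length, ?_, ?_⟩
      · rw [← degL_eq_zero h0]; rfl
      · rintro rfl; simp at h; exact h h0
    · obtain ⟨A, t, a, rfl, ht⟩ := ih h0
      exact ⟨s :: A, t, a, rfl, ht⟩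

theorem degL_ne {t : STerm S ar} (ht : t ≠ leaf) (L : List (STerm S ar)) : degL (t :: L) ≠ 0 := by
  cases t with
  | leaf => exact absurd rfl ht
  | node g c => rw [degL_node]; omega

theorem underP_eq (M N : List (STerm S ar)) (hN : IsReducedF N) :
    underP (rd M) N = rd (fill (M ++ List.replicate N.length leaf) N) := by
  by_cases h0 : degL M = 0
  · rw [fill_zero (by simp [h0])]
    have : rd M = [] := by rw [degL_eq_zero h0]; simp
    rw [this]
    simp only [underP, List.getLast?_nil]
    rw [List.take_of_length_le (by simp)]
    simp [rd_of_reduced hN]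
  · obtain ⟨A, t, a, rfl, ht⟩ := split_last M h0
    have e1 : rd (A ++ t :: List.replicate a leaf) = rd A ++ [t] := by
      simp [rd_cons_ne ht]
    rw [e1]
    simp only [underP, List.getLast?_append, List.getLast?_singleton, Option.some_or,
      List.dropLast_concat]
    have hne : underSub t (N.take t.extremalCount) ≠ leaf := by
      unfold underSub
      cases t with
      | leaf => exact absurd rfl ht
      | node g c => rw [STerm.graftList]; simp
    have e2 : A ++ t :: List.replicate a leaf ++ List.replicate N.length leaf
        = A ++ ([t] ++ List.replicate (a + N.length) leaf) := by simp
    have hext := extremalCount_eq t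
    have e3 : fill (A ++ ([t] ++ List.replicate (a + N.length) leaf)) N
        = A ++ ([underSub t (N.take t.extremalCount)] ++
          gra (List.replicate (a + N.length) leaf) (N.drop t.extremalCount)) := by
      unfold fill
      rw [neL_append _ _ (show degL ([t] ++ List.replicate (a + N.length) leaf) ≠ 0 from degL_ne ht _), neL_append_zero _ _ (by simp), gra_append, gra_append,
        List.replicate_add, List.append_assoc, gra_take _ _ _ (by simp), gra_replicate, underSub_eq]
      unfold fill
      congr 2
      · rw [List.drop_append_of_le_length (by simp)]
        simp only [List.drop_replicate, Nat.sub_self, List.replicate_zero, List.length_replicate,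
          List.nil_append, List.drop_left']
        apply gra_congr
        intro p hp
        by_cases hlt : p < neL [t]
        · simp [hlt, List.getElem?_append_left]
        · simp only [List.getD_eq_getElem?_getD]
          rw [List.getElem?_append_right (by simp; omega), List.getElem?_append_right (by simp; omega)]
          rw [List.getElem?_take, if_pos (by simp; omega)]
      · congr 1
        rw [List.drop_drop, ← List.append_assoc, List.replicate_append_replicate, List.drop_append]
        simp
        have x1 : arL A + neL [t] - (arL A + arL [t]) = 0 := by omega
        have x2 : arL A + arL [t] - (arL A + neL [t]) = t.extremalCount := by omega
        rw [x1, x2]; simp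
    rw [e2, e3, rd_append, rd_append, rd_cons_ne hne, gra_leaves, rd_append, rd_replicate,
      List.take_of_length_le (i := a + N.length) (l := N.drop t.extremalCount) (by simp; omega),
      rd_of_reduced (L := N.drop _)]
    · simp
    · intro s hs
      exact hN s (List.mem_of_mem_drop hs)

theorem upper_SMs (hpos : ∀ g : S, 0 < ar g) (k : ℕ) (L : List (STerm S ar)) :
    SMs L (fill (C k L) (R k L)) := by
  induction L using peel_ind generalizing k with
  | nil => simp [fill]; exact Relation.ReflTransGen.refl
  | hl M ih =>
    rw [C_leaf, R_leaf]
    by_cases h : degL (C k M) = 0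
    · cases k with
      | zero =>
        have := bubble_left (leaf :: M)
        rw [fill_zero (by simpa using h), R_zero, C_zero]
        have h2 := rd_length_le M
        rw [List.take_of_length_le (by simp; omega)]
        simpa using this
      | succ k =>
        have h3 : degL M = 0 := by
          clear ih
          induction M with
          | nil => rfl
          | cons t M ihM =>
            cases t with
            | leaf => simp at h ⊢; exact ihM h
            | node g c =>
              rw [C_node, act] at h
              exact absurd h (degL_ne (by simp) _)
        rw [R_full _ _ (by omega), C_full _ _ (by omega), fill_zero (by simpa using h3)]
        have := degL_eq_zero (L := leaf :: M) (by simpa using h3)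
        simp only [List.take_nil, List.nil_append, List.length_nil, Nat.sub_zero]
        rw [← this]
        exact Relation.ReflTransGen.refl
    · rw [fill_leaf h]; exact (ih k).cons leaf
  | hn g c M ih =>
    cases k with
    | zero =>
      have := bubble_left (node g c :: M)
      rw [C_zero, R_zero, fill_zero (by simp)]
      have h2 := rd_length_le (node g c :: M)
      rw [List.take_of_length_le (by simpa using h2)]
      simpa using this
    | succ k =>
      have := (ih k).act hpos g (by simp)
      rw [C_node, R_node]
      rw [act_append] at this
      have hl : ar g ≤ (C k (List.ofFn c ++ M)).length := by simp
      obtain ⟨c', M', e⟩ := exists_ofFn (C k (List.ofFn c ++ M)) hl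
      rw [e] at this ⊢
      rwa [act_append, fill_node]

theorem upper_le (hpos : ∀ g : S, 0 < ar g) (k : ℕ) (f : List (STerm S ar)) (hf : IsReducedF f) :
    EWLe f (underP (rd (C k f)) (R k f)) := by
  have := (upper_SMs hpos k (f ++ List.replicate (R k f).length leaf)).rd_le
  rw [C_append, R_append, C_replicate, R_replicate, List.append_nil,
    ← underP_eq _ _ (R_reduced k f)] at this
  simpa [rd_of_reduced hf] using this

theorem C_fill (M N : List (STerm S ar)) : C (degL M) (fill M N) = M := by
  induction M using peel_ind with
  | nil => simp [fill]
  | hl M ih =>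
    by_cases h : degL M = 0
    · rw [degL_leaf, h, C_zero, fill_length]
      exact (degL_eq_zero (by simpa using h)).symm
    · rw [fill_leaf h]; simp [ih]
  | hn g c M ih =>
    rw [fill_node, degL_node]
    obtain ⟨c', M', e⟩ := exists_ofFn (n := ar g) (fill (List.ofFn c ++ M) N) (by simp [fill_length])
    rw [e] at ih ⊢
    rw [act_append, C_node, ih, act_append]

theorem R_fill (M N : List (STerm S ar)) (h : N.length + neL M ≤ arL M) :
    R (degL M) (fill M N) = rd N := by
  induction M using peel_ind with
  | nil => simp at h; simp [fill, h]
  | hl M ih =>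
    by_cases h0 : degL M = 0
    · rw [degL_leaf, h0, R_zero, fill_zero (by simpa using h0)]
      have h1 : arL M = M.length := by
        conv_lhs => rw [degL_eq_zero h0]
        simp
      rw [arL_leaf, h1] at h
      rw [List.take_of_length_le (by simp; omega)]
      simp
    · rw [neL_leaf h0, arL_leaf] at h
      rw [fill_leaf h0]; simp; exact ih (by omega)
  | hn g c M ih =>
    rw [neL_node, arL_node] at h
    rw [fill_node, degL_node]
    have ih := ih h
    obtain ⟨c', M', e⟩ := exists_ofFn (n := ar g) (fill (List.ofFn c ++ M) N) (by simp [fill_length])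
    rw [e] at ih ⊢
    rw [act_append, R_node, ih]

theorem C_under (a b : List (STerm S ar)) (ha : IsReducedF a) (hb : IsReducedF b) :
    rd (C (degL a) (underP a b)) = a := by
  have e := underP_eq a b hb
  rw [rd_of_reduced ha] at e
  rw [e, rd_C_rd]
  have := C_fill (a ++ List.replicate b.length leaf) b
  simp only [degL_append, degL_replicate, Nat.add_zero] at this
  rw [this]; simp [rd_of_reduced ha]

theorem R_under (a b : List (STerm S ar)) (ha : IsReducedF a) (hb : IsReducedF b) :
    R (degL a) (underP a b) = b := by
  have e := underP_eq a b hb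
  rw [rd_of_reduced ha] at e
  rw [e, R_rd]
  have h := neL_le a
  have := R_fill (a ++ List.replicate b.length leaf) b
    (by rw [neL_append_zero _ _ (by simp)]; simp; omega)
  simp only [degL_append, degL_replicate, Nat.add_zero] at this
  rw [this]; exact rd_of_reduced hb

theorem C_over (a b : List (STerm S ar)) (ha : IsReducedF a) :
    rd (C (degL a) (a ++ b)) = a := by
  rw [C_append, C_full _ _ le_rfl, Nat.sub_self, C_zero]
  simp [rd_of_reduced ha]

theorem R_over (a b : List (STerm S ar)) (hb : IsReducedF b) :
    R (degL a) (a ++ b) = b := by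
  rw [R_append, R_full _ _ le_rfl, Nat.sub_self, R_zero]
  simp [rd_of_reduced hb]

end EW

namespace EW
open STerm
variable {S : Type} {ar : S → ℕ}

theorem preoL_inj {M M' : List (STerm S ar)} (h : preoL M = preoL M') : M = M' := by
  induction M using peel_ind generalizing M' with
  | nil =>
    cases M' with
    | nil => rfl
    | cons t M' =>
      cases t with
      | leaf => simp at h
      | node g c => rw [preoL_node] at h; simp at h
  | hl M ih =>
    cases M' with
    | nil => simp at h
    | cons t M' =>
      cases t with
      | leaf => simp at h; rw [ih h]
      | node g c => rw [preoL_node] at h; simp at h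
  | hn g c M ih =>
    cases M' with
    | nil => rw [preoL_node] at h; simp at h
    | cons t M' =>
      cases t with
      | leaf => rw [preoL_node] at h; simp at h
      | node g' c' =>
        rw [preoL_node, preoL_node] at h
        injection h with h1 h2
        injection h1 with h1
        subst h1
        have := ih h2
        obtain ⟨h3, h4⟩ := List.append_inj this (by simp)
        rw [List.ofFn_injective h3, h4]

/-- number of pairs (leaf, later node) in a preorder word -/
def winv : List (Option S) → ℕ
  | [] => 0
  | none :: w => w.countP (fun o => o.isSome) + winv w
  | some _ :: w => winv w

theorem winv_append (u v : List (Option S)) :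
    winv (u ++ v) = winv u + winv v
      + u.countP (fun o => o.isNone) * v.countP (fun o => o.isSome) := by
  induction u with
  | nil => simp [winv]
  | cons o u ih =>
    cases o with
    | none => simp [winv, ih]; ring
    | some g => simp [winv, ih]

def invL (f : List (STerm S ar)) : ℕ := winv (preoL f)

theorem SM.props (hpos : ∀ g : S, 0 < ar g) {L L' : List (STerm S ar)} (h : SM L L') :
    invL L' < invL L ∧ (preoL L').Perm (preoL L) := by
  induction L using peel_ind generalizing L' with
  | nil => cases h <;> simp_all
  | hl M ih =>
    rcases SM.inv_leaf h with ⟨M', rfl, h'⟩ | ⟨x, post, rfl, hx, rfl⟩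
    · obtain ⟨h1, h2⟩ := ih h'
      constructor
      · unfold invL at h1 ⊢
        rw [preoL_leaf, preoL_leaf, winv, winv, h2.countP_eq]; omega
      · rw [preoL_leaf, preoL_leaf]; exact h2.cons _
    · have e1 : preoL (x :: leaf :: post) = x.preo ++ none :: preoL post := by
        rw [preoL_cons, preoL_leaf]
      have e2 : preoL (leaf :: x :: post) = none :: (x.preo ++ preoL post) := by
        rw [preoL_leaf, preoL_cons]
      unfold invL
      rw [e1, e2]
      refine ⟨?_, List.perm_middle⟩
      have hx0 : 0 < x.preo.countP (fun o => o.isSome) := by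
        cases x with
        | leaf => exact absurd rfl hx
        | node g c => rw [STerm.preo]; simp
      rw [winv, winv_append, winv_append, winv]
      simp; omega
  | hn g c M ih =>
    obtain ⟨c', M', rfl, h'⟩ := SM.inv_node hpos h
    obtain ⟨h1, h2⟩ := ih h'
    constructor
    · unfold invL at h1 ⊢
      rw [preoL_node, preoL_node, winv, winv]; exact h1
    · rw [preoL_node, preoL_node]; exact h2.cons _

theorem ForestMove.props (hpos : ∀ g : S, 0 < ar g) {f f' : List (STerm S ar)}
    (h : ForestMove f f') :
    invL f' < invL f ∧ degL f' = degL f ∧ (preoL f').Subperm (preoL f) := by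
  rcases ForestMove.toSM h with hs | ⟨a, b, rfl, hs⟩
  · obtain ⟨h1, h2⟩ := SM.props hpos hs
    exact ⟨h1, h2.countP_eq _, h2.subperm⟩
  · obtain ⟨h1, h2⟩ := SM.props hpos hs
    refine ⟨lt_of_le_of_lt ?_ h1, ?_, List.Subperm.trans (List.Sublist.subperm ?_) h2.subperm⟩
    · unfold invL
      rw [preoL_append, preoL_append, winv_append, winv_append, preoL_leaf, winv]
      simp
    · have := h2.countP_eq (fun o => o.isSome)
      change degL _ = degL _ at this
      rw [← this]; simp
    · rw [preoL_append, preoL_append, preoL_leaf]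
      exact (List.sublist_cons_self _ _).append_left _

theorem EWLe.props (hpos : ∀ g : S, 0 < ar g) {f f' : List (STerm S ar)}
    (h : EWLe f f') :
    (f' = f ∨ invL f' < invL f) ∧ degL f' = degL f ∧ (preoL f').Subperm (preoL f) := by
  induction h with
  | refl => exact ⟨Or.inl rfl, rfl, List.Subperm.refl _⟩
  | tail _ h ih =>
    obtain ⟨i1, i2, i3⟩ := ih
    obtain ⟨h1, h2, h3⟩ := ForestMove.props hpos h
    refine ⟨Or.inr ?_, h2.trans i2, h3.trans i3⟩
    rcases i1 with rfl | i1 <;> omega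

theorem EWLe.antisymm (hpos : ∀ g : S, 0 < ar g) {f f' : List (STerm S ar)}
    (h : EWLe f f') (h' : EWLe f' f) : f = f' := by
  rcases (EWLe.props hpos h).1 with h1 | h1
  · exact h1.symm
  · rcases (EWLe.props hpos h').1 with h2 | h2
    · exact h2
    · omega

theorem finite_subperm {α : Type} (w : List α) : {u : List α | u.Subperm w}.Finite := by
  apply Set.Finite.subset (s := ⋃ v ∈ {v | v ∈ w.sublists}, {u | u ∈ v.permutations})
  · exact Set.Finite.biUnion (List.finite_toSet _) fun v _ => List.finite_toSet _
  · rintro u ⟨v, h1, h2⟩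
    simp only [Set.mem_iUnion, Set.mem_ofPred_eq]
    exact ⟨v, List.mem_sublists.2 h2, List.mem_permutations.2 h1.symm⟩

theorem upper_finite (hpos : ∀ g : S, 0 < ar g) (f : List (STerm S ar)) :
    {f' | EWLe f f'}.Finite := by
  apply Set.Finite.of_finite_image (f := preoL)
  · apply (finite_subperm (preoL f)).subset
    rintro _ ⟨f', h, rfl⟩
    exact (EWLe.props hpos h).2.2
  · intro x _ y _ h
    exact preoL_inj h

theorem ForestMove.append_left (p : List (STerm S ar)) {f f' : List (STerm S ar)}
    (h : ForestMove f f') : ForestMove (p ++ f) (p ++ f') := by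
  cases h with
  | root pre t t' post hne =>
    have := ForestMove.root (p ++ pre) t t' post hne
    simpa using this
  | tree pre t t' post hm =>
    have := ForestMove.tree (p ++ pre) t t' post hm
    simpa using this

theorem ForestMove.append_right (p : List (STerm S ar)) {f f' : List (STerm S ar)}
    (h : ForestMove f f') : ForestMove (f ++ p) (f' ++ p) := by
  cases h with
  | root pre t t' post hne =>
    have := ForestMove.root pre t t' (post ++ p) hne
    simpa using this
  | tree pre t t' post hm =>
    have := ForestMove.tree pre t t' (post ++ p) hm
    simpa using this

theorem EWLe.append {a a' b b' : List (STerm S ar)} (h : EWLe a a') (h' : EWLe b b') :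
    EWLe (a ++ b) (a' ++ b') := by
  have h1 : EWLe (a ++ b) (a' ++ b) :=
    Relation.ReflTransGen.lift (fun x => x ++ b) (fun _ _ h => ForestMove.append_right b h) _ _ h
  have h2 : EWLe (a' ++ b) (a' ++ b') :=
    Relation.ReflTransGen.lift (fun x => a' ++ x) (fun _ _ h => ForestMove.append_left a' h) _ _ h'
  exact h1.trans h2

/-- underlying forest -/
abbrev vl (f : List (RTerm S ar)) : List (STerm S ar) := f.map Subtype.val

theorem vl_reduced (f : List (RTerm S ar)) : IsReducedF (vl f) := by
  intro t ht
  obtain ⟨x, _, rfl⟩ := List.mem_map.1 ht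
  exact x.2

theorem vl_inj {f g : List (RTerm S ar)} (h : vl f = vl g) : f = g :=
  List.map_injective_iff.2 Subtype.val_injective h

theorem vl_rdF (L : List (STerm S ar)) : vl (rdF L) = rd L := by
  induction L with
  | nil => rfl
  | cons t L ih =>
    cases t with
    | leaf => rw [rdF, ih, rd_leaf]
    | node g c => rw [rdF, rd_node, ← ih]; rfl

theorem upperR_finite (hpos : ∀ g : S, 0 < ar g) (f : List (RTerm S ar)) :
    {f' : List (RTerm S ar) | EWLe (vl f) (vl f')}.Finite :=
  Set.Finite.preimage (fun _ _ _ _ h => vl_inj h) (upper_finite hpos (vl f))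

theorem cut_spec (hpos : ∀ g : S, 0 < ar g) (f' f'' g' g'' h : List (RTerm S ar))
    (h1 : EWLe (vl f') (vl g')) (h2 : EWLe (vl f'') (vl g'')) :
    (EWLe (vl (f' ++ f'')) (vl h) ∧ rdF (C (degL (vl f')) (vl h)) = g' ∧
      rdF (R (degL (vl f')) (vl h)) = g'') ↔
    (EWLe (vl (g' ++ g'')) (vl h) ∧ EWLe (vl h) (underP (vl g') (vl g''))) := by
  have hd := (EWLe.props hpos h1).2.1
  have happ : ∀ a b : List (RTerm S ar), vl (a ++ b) = vl a ++ vl b := fun a b => by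
    simp [vl]
  constructor
  · rintro ⟨h0, rfl, rfl⟩
    have e : rd (R (degL (vl f')) (vl h)) = R (degL (vl f')) (vl h) :=
      rd_of_reduced (R_reduced _ _)
    rw [happ, vl_rdF, vl_rdF, e]
    exact ⟨lower_le hpos _ _ (vl_reduced h), upper_le hpos _ _ (vl_reduced h)⟩
  · rintro ⟨h3, h4⟩
    rw [happ] at h3
    refine ⟨?_, ?_, ?_⟩
    · rw [happ]; exact (EWLe.append h1 h2).trans h3
    · apply vl_inj
      rw [vl_rdF]
      have a1 := C_mono hpos (degL (vl g')) h3
      have a2 := C_mono hpos (degL (vl g')) h4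
      rw [C_over _ _ (vl_reduced _)] at a1
      rw [C_under _ _ (vl_reduced _) (vl_reduced _)] at a2
      rw [← hd]
      exact EWLe.antisymm hpos a2 a1
    · apply vl_inj
      rw [vl_rdF, rd_of_reduced (R_reduced _ _)]
      have a1 := R_mono hpos (degL (vl g')) h3
      have a2 := R_mono hpos (degL (vl g')) h4
      rw [R_over _ _ (vl_reduced _)] at a1
      rw [R_under _ _ (vl_reduced _) (vl_reduced _)] at a2
      rw [← hd]
      exact EWLe.antisymm hpos a2 a1

end EW

/-- product rule for the fundamental basis `F`. The family `F` is characterized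
(by Möbius inversion for the easterly wind order, whose upper sets are finite) by
`E_f = Σ_{f ≼ f'} F_{f'}`; then `F_{f'} · F_{f''} = Σ_{f' ▽ f'' ≼ f ≼ f' △ f''} F_f`. -/
theorem Fbasis_product {S : Type} {ar : S → ℕ} (hpos : ∀ g : S, 0 < ar g)
    (𝕂 : Type) [Field 𝕂] [CharZero 𝕂]
    (F : List (RTerm S ar) → NAlg 𝕂 S ar)
    (hF : ∀ f : List (RTerm S ar),
      EBasis 𝕂 f =
        ∑ᶠ f' ∈ {f' : List (RTerm S ar) |
            EWLe (f.map Subtype.val) (f'.map Subtype.val)}, F f')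
    (f' f'' : List (RTerm S ar)) :
    F f' * F f'' =
      ∑ᶠ f ∈ {f : List (RTerm S ar) |
          EWLe ((f' ++ f'').map Subtype.val) (f.map Subtype.val) ∧
          EWLe (f.map Subtype.val) (underP (f'.map Subtype.val) (f''.map Subtype.val))},
        F f := by
  classical
  induction hn : EW.invL (EW.vl f') + EW.invL (EW.vl f'') using Nat.strong_induction_on
    generalizing f' f'' with
  | _ n ih =>
  have hF' : ∀ f : List (RTerm S ar),
      EBasis 𝕂 f = ∑ g ∈ (EW.upperR_finite hpos f).toFinset, F g := by
    intro f
    rw [hF f, finsum_mem_eq_finite_toFinset_sum _ (EW.upperR_finite hpos f)]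
  have hI : ∀ g' g'' : List (RTerm S ar), {f : List (RTerm S ar) |
          EWLe ((g' ++ g'').map Subtype.val) (f.map Subtype.val) ∧
          EWLe (f.map Subtype.val) (underP (g'.map Subtype.val) (g''.map Subtype.val))}.Finite :=
    fun g' g'' => (EW.upperR_finite hpos (g' ++ g'')).subset fun f hf => hf.1
  have hmul : EBasis 𝕂 f' * EBasis 𝕂 f'' = EBasis 𝕂 (f' ++ f'') := by
    unfold EBasis
    rw [← map_mul]
    rfl
  rw [hF' f', hF' f'', hF' (f' ++ f''), Finset.sum_mul_sum, ← Finset.sum_product'] at hmul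
  have hfib := Finset.sum_fiberwise_of_maps_to
    (s := (EW.upperR_finite hpos (f' ++ f'')).toFinset)
    (t := (EW.upperR_finite hpos f').toFinset ×ˢ (EW.upperR_finite hpos f'').toFinset)
    (g := fun h => (rdF (EW.C (EW.degL (EW.vl f')) (EW.vl h)),
      rdF (EW.R (EW.degL (EW.vl f')) (EW.vl h)))) (by
      intro h hh
      have hh' : EWLe (EW.vl (f' ++ f'')) (EW.vl h) := by simpa using hh
      have happ : EW.vl (f' ++ f'') = EW.vl f' ++ EW.vl f'' := by simp [EW.vl]
      rw [happ] at hh'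
      have a1 := EW.C_mono hpos (EW.degL (EW.vl f')) hh'
      have a2 := EW.R_mono hpos (EW.degL (EW.vl f')) hh'
      rw [EW.C_over _ _ (EW.vl_reduced _)] at a1
      rw [EW.R_over _ _ (EW.vl_reduced _)] at a2
      rw [Finset.mem_product, Set.Finite.mem_toFinset, Set.Finite.mem_toFinset]
      refine ⟨?_, ?_⟩
      · change EWLe (EW.vl f') (EW.vl (rdF _))
        rw [EW.vl_rdF]; exact a1
      · change EWLe (EW.vl f'') (EW.vl (rdF _))
        rw [EW.vl_rdF, EW.rd_of_reduced (EW.R_reduced _ _)]; exact a2) F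
  have hinner : ∀ p ∈ (EW.upperR_finite hpos f').toFinset ×ˢ
      (EW.upperR_finite hpos f'').toFinset,
      (∑ h ∈ (EW.upperR_finite hpos (f' ++ f'')).toFinset with
        (rdF (EW.C (EW.degL (EW.vl f')) (EW.vl h)),
          rdF (EW.R (EW.degL (EW.vl f')) (EW.vl h))) = p, F h)
      = ∑ h ∈ (hI p.1 p.2).toFinset, F h := by
    rintro ⟨g', g''⟩ hp
    rw [Finset.mem_product, Set.Finite.mem_toFinset, Set.Finite.mem_toFinset] at hp
    apply Finset.sum_congr _ (fun _ _ => rfl)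
    ext h
    rw [Finset.mem_filter, Set.Finite.mem_toFinset, Set.Finite.mem_toFinset, Prod.mk.injEq]
    exact EW.cut_spec hpos f' f'' g' g'' h hp.1 hp.2
  rw [Finset.sum_congr rfl hinner] at hfib
  rw [← hfib] at hmul
  have hmem : (f', f'') ∈ (EW.upperR_finite hpos f').toFinset ×ˢ
      (EW.upperR_finite hpos f'').toFinset := by
    rw [Finset.mem_product, Set.Finite.mem_toFinset, Set.Finite.mem_toFinset]
    exact ⟨Relation.ReflTransGen.refl, Relation.ReflTransGen.refl⟩
  rw [← Finset.add_sum_erase _ _ hmem, ← Finset.add_sum_erase _ _ hmem] at hmul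
  have hrest : ∀ p ∈ ((EW.upperR_finite hpos f').toFinset ×ˢ
      (EW.upperR_finite hpos f'').toFinset).erase (f', f''),
      F p.1 * F p.2 = ∑ h ∈ (hI p.1 p.2).toFinset, F h := by
    rintro ⟨g', g''⟩ hp
    rw [Finset.mem_erase, Finset.mem_product, Set.Finite.mem_toFinset,
      Set.Finite.mem_toFinset] at hp
    obtain ⟨hne, h1, h2⟩ := hp
    rw [← finsum_mem_eq_finite_toFinset_sum]
    refine ih _ ?_ g' g'' rfl
    have b1 := (EW.EWLe.props hpos h1).1
    have b2 := (EW.EWLe.props hpos h2).1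
    rw [← hn]
    rcases b1 with b1 | b1
    · have c1 : g' = f' := EW.vl_inj b1
      rcases b2 with b2 | b2
      · exact absurd (Prod.ext c1 (EW.vl_inj b2)) hne
      · rw [c1]; exact Nat.add_lt_add_left b2 _
    · rcases b2 with b2 | b2
      · have c2 : g'' = f'' := EW.vl_inj b2
        rw [c2]; exact Nat.add_lt_add_right b1 _
      · exact Nat.add_lt_add b1 b2
  rw [Finset.sum_congr rfl hrest] at hmul
  rw [finsum_mem_eq_finite_toFinset_sum _ (hI f' f'')]
  exact add_right_cancel hmul
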